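/- arXiv:2009.10635 — 2 statements merged into one kernel-verified Lean document; each statement's English description precedes it below -/
import Mathlib

section
/- Let ρ be an arbitrary metric on the space sG of s-graphons compatible with the weak topology, and let d_H^ρ be the induced Hausdorff distance on the hyperspace of compact subsets of sG. Then for every ε > 0 there exists K ∈ ℕ such that for EVERY s-graphon ν, d_H^ρ( C(ν), C̃(ν,K) ) ≤ ε. -/
open MeasureTheory Topology Filter

noncomputable section

/-- The unit square `[0,1]²`. -/
abbrev Sq : Type := unitInterval × unitInterval

/-- Convergence of a sequence of subsets in the Vietoris topology
(upper + lower Vietoris convergence). -/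
def VietorisTendsto {X : Type*} [TopologicalSpace X] (A : ℕ → Set X) (B : Set X) : Prop :=
  (∀ U : Set X, IsOpen U → B ⊆ U → ∀ᶠ n in atTop, A n ⊆ U) ∧
  (∀ U : Set X, IsOpen U → (B ∩ U).Nonempty → ∀ᶠ n in atTop, (A n ∩ U).Nonempty)

/-- A measure on the unit square is symmetric if it is invariant under the coordinate swap. -/
def IsSymmSq (μ : Measure Sq) : Prop := μ.map Prod.swap = μ

/-- s-graphons: symmetric Borel probability measures on the unit square,
with the weak topology. -/
def SGraphon : Type := {μ : ProbabilityMeasure Sq // IsSymmSq (μ : Measure Sq)}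

instance : TopologicalSpace SGraphon :=
  inferInstanceAs (TopologicalSpace {μ : ProbabilityMeasure Sq // IsSymmSq (μ : Measure Sq)})

/-- The underlying measure of an s-graphon. -/
def SGraphon.toMeasure (μ : SGraphon) : Measure Sq := (μ.1 : Measure Sq)

/-- A non-negative bounded Borel function on the unit square is fairly distributed
if all its horizontal and vertical sections integrate (w.r.t. Lebesgue measure) to 1. -/
structure FairlyDistributed (f : Sq → ℝ) : Prop where
  measurable : Measurable f
  nonneg : ∀ p, 0 ≤ f p
  bounded : ∃ C : ℝ, ∀ p, f p ≤ C
  row : ∀ x : unitInterval, ∫ v, f (x, v) = 1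
  col : ∀ y : unitInterval, ∫ u, f (u, y) = 1

/-- The density `φ(f,μ)`. -/
def phiFn (f : Sq → ℝ) (μ : Measure Sq) (p : Sq) : ℝ :=
  ∫ q, f (q.1, p.1) * f (q.2, p.2) ∂μ

/-- The measure `Φ(f,μ)`, with density `φ(f,μ)` w.r.t. 2-dimensional Lebesgue measure. -/
def PhiMeas (f : Sq → ℝ) (μ : Measure Sq) : Measure Sq :=
  volume.withDensity fun p => ENNReal.ofReal (phiFn f μ p)

/-- The shape of a measure `μ` on the unit square: the weak closure of the set of
(s-graphons corresponding to) the measures `Φ(f,μ)`, `f` continuous fairly distributed. -/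
def shapeM (μ : Measure Sq) : Set SGraphon :=
  closure {ν : SGraphon | ∃ f : Sq → ℝ, FairlyDistributed f ∧ Continuous f ∧
    ν.toMeasure = PhiMeas f μ}

/-- The shape `C(μ)` of an s-graphon. -/
def shape (μ : SGraphon) : Set SGraphon := shapeM μ.toMeasure

/-- A fractional partition into `k` parts: non-negative Borel functions on `[0,1]`
summing to the constant function 1, each integrating to `1/k`. -/
def IsFracPartition (k : ℕ) (f : Fin k → unitInterval → ℝ) : Prop :=
  (∀ i, Measurable (f i)) ∧ (∀ i x, 0 ≤ f i x) ∧ (∀ x, ∑ i, f i x = 1) ∧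
    ∀ i, ∫ x, f i x = 1 / k

/-- The `k`-shape `C(μ,k)`: the closure in `ℝ^{k×k}` of the set of density matrices of
fractional partitions into `k` parts. -/
def kShape (μ : Measure Sq) (k : ℕ) : Set (Matrix (Fin k) (Fin k) ℝ) :=
  closure {M | ∃ f : Fin k → unitInterval → ℝ, IsFracPartition k f ∧
    ∀ i j, M i j = ∫ p, f i p.1 * f j p.2 ∂μ}

/-- `M_k^*`: symmetric `k×k` matrices with non-negative entries summing to 1. -/
def Mstar (k : ℕ) : Set (Matrix (Fin k) (Fin k) ℝ) :=
  {M | M.IsSymm ∧ (∀ i j, 0 ≤ M i j) ∧ ∑ i, ∑ j, M i j = 1}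

/-- The index `i` (0-based) with `u ∈ [i/k, (i+1)/k)` (and `i = k-1` for `u = 1`). -/
def gridIdx (k : ℕ) (hk : 0 < k) (u : unitInterval) : Fin k :=
  ⟨min ⌊(u : ℝ) * k⌋₊ (k - 1), lt_of_le_of_lt (min_le_right _ _) (Nat.sub_lt hk one_pos)⟩

/-- The measure `μ_M` associated to a `k×k` matrix `M`: its density w.r.t. 2-dimensional
Lebesgue measure equals `k² M(i,j)` on the square `[i/k,(i+1)/k) × [j/k,(j+1)/k)` (0-based). -/
def muM {k : ℕ} (M : Matrix (Fin k) (Fin k) ℝ) : Measure Sq :=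
  if hk : 0 < k then
    volume.withDensity fun p =>
      ENNReal.ofReal ((k : ℝ) ^ 2 * M (gridIdx k hk p.1) (gridIdx k hk p.2))
  else 0

/-- `C̃(μ,k)`: the `k`-shape of `μ`, interpreted as a set of s-graphons. -/
def kShapeTilde (μ : Measure Sq) (k : ℕ) : Set SGraphon :=
  {ν : SGraphon | ∃ M ∈ kShape μ k, ν.toMeasure = muM M}

/-- The interval `I_i = [i/k, (i+1)/k)` (0-based), with `I_{k-1} = [(k-1)/k, 1]`,
as a subset of `[0,1]`. -/
def Ik (k : ℕ) (i : Fin k) : Set unitInterval :=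
  if (i : ℕ) + 1 = k then Subtype.val ⁻¹' Set.Icc (((i : ℕ) : ℝ) / k) 1
  else Subtype.val ⁻¹' Set.Ico (((i : ℕ) : ℝ) / k) ((((i : ℕ) : ℝ) + 1) / k)

/-!
Cut the square into the `K²` cells `I_i × I_j`. Continuous functions are nearly constant on cells
when `K` is large, so two s-graphons whose cell masses agree up to `1 / K³` are weakly close; by
compactness of the space of s-graphons this closeness is uniform and holds for any compatible
metric. It remains to match cell masses. The cell masses of `Φ(f, ν)` are exactly the density
matrix of the fractional partition `x ↦ ∫_{I_i} f(x, u) du`, so `Φ(f, ν)` agrees on all cells with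
an element of `C̃(ν, K)`. Conversely, a fractional partition is `L¹`-approximated, with respect to
Lebesgue measure and both marginals of `ν`, by a continuous one `c`, and the indicators of the
`I_i` by a continuous fractional partition `h`. The kernel `K ∑ i, c_i(x) h_i(y)` is then
continuous and fairly distributed, and its averages over the `I_i` nearly give `c` back.
-/

/-! ### Measures on a finite partition and on compact spaces -/

/-- For compact Hausdorff `X` the filter `𝓝ˢ (Set.diagonal X)` is the uniformity of `X`, so this
says that continuous functions separating points generate the uniformity. -/
lemma iInf_comap_sub_le_nhdsSet_diagonal {X ι : Type*} [TopologicalSpace X] [CompactSpace X]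
    {F : ι → X → ℝ} (hF : ∀ i, Continuous (F i))
    (hsep : ∀ x y, (∀ i, F i x = F i y) → x = y) :
    ⨅ i, comap (fun p : X × X => F i p.1 - F i p.2) (𝓝 0) ≤ 𝓝ˢ (Set.diagonal X) := by
  refine le_iff_ultrafilter.2 fun u hu => ?_
  have hlim : ↑u ≤ 𝓝 u.lim := u.le_nhds_lim
  have hdiag : u.lim.1 = u.lim.2 := by
    refine hsep _ _ fun i => sub_eq_zero.1 ?_
    have hcont : Continuous fun p : X × X => F i p.1 - F i p.2 :=
      ((hF i).comp continuous_fst).sub ((hF i).comp continuous_snd)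
    exact tendsto_nhds_unique ((hcont.tendsto _).mono_left hlim)
      (tendsto_iff_comap.2 (hu.trans (iInf_le _ i)))
  exact hlim.trans (nhds_le_nhdsSet hdiag)

lemma abs_integral_sub_integral_le_of_forall_abs_sub_le {X : Type*} [MeasurableSpace X]
    {μ : Measure X} [IsProbabilityMeasure μ] {g h : X → ℝ} (hg : Integrable g μ)
    (hh : Integrable h μ) {w : ℝ} (hw : ∀ x, |g x - h x| ≤ w) :
    |∫ x, g x ∂μ - ∫ x, h x ∂μ| ≤ w := by
  rw [← integral_sub hg hh]
  simpa using norm_integral_le_of_norm_le_const (μ := μ) (f := fun x => g x - h x)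
    (Eventually.of_forall hw)

section Fibers

variable {X ι : Type*} [MeasurableSpace X] [Fintype ι] [MeasurableSpace ι]
  [MeasurableSingletonClass ι] {π : X → ι}

lemma integral_comp_eq_sum_fibers (hπ : Measurable π) (μ : Measure X) [IsFiniteMeasure μ]
    (F : ι → ℝ) : ∫ x, F (π x) ∂μ = ∑ i, μ.real (π ⁻¹' {i}) * F i := by
  rw [← integral_map hπ.aemeasurable (measurable_of_finite F).aestronglyMeasurable,
    integral_fintype .of_finite]
  exact Finset.sum_congr rfl fun i _ => by
    rw [map_measureReal_apply hπ (measurableSet_singleton i), smul_eq_mul]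

lemma abs_integral_sub_integral_le_of_fibers (hπ : Measurable π) {σ τ : Measure X}
    [IsProbabilityMeasure σ] [IsProbabilityMeasure τ] {g : X → ℝ} (hgσ : Integrable g σ)
    (hgτ : Integrable g τ) {F : ι → ℝ} {w C δ : ℝ} (hw : ∀ x, |g x - F (π x)| ≤ w)
    (hF : ∀ i, |F i| ≤ C) (hδ : ∀ i, |σ.real (π ⁻¹' {i}) - τ.real (π ⁻¹' {i})| ≤ δ) :
    |∫ x, g x ∂σ - ∫ x, g x ∂τ| ≤ 2 * w + Fintype.card ι * (δ * C) := by
  have hστ : |∫ x, F (π x) ∂σ - ∫ x, F (π x) ∂τ| ≤ Fintype.card ι * (δ * C) := by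
    rw [integral_comp_eq_sum_fibers hπ, integral_comp_eq_sum_fibers hπ,
      ← Finset.sum_sub_distrib, ← nsmul_eq_mul]
    refine (Finset.abs_sum_le_sum_abs _ _).trans (Finset.sum_le_card_nsmul _ _ _ fun i _ => ?_)
    rw [← sub_mul, abs_mul]
    exact mul_le_mul (hδ i) (hF i) (abs_nonneg _) ((abs_nonneg _).trans (hδ i))
  have hFπ (μ : Measure X) [IsProbabilityMeasure μ] : Integrable (fun x => F (π x)) μ :=
    Integrable.of_finite.comp_measurable hπ
  have hσ := abs_le.1 (abs_integral_sub_integral_le_of_forall_abs_sub_le hgσ (hFπ σ) hw)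
  have hτ := abs_le.1 (abs_integral_sub_integral_le_of_forall_abs_sub_le hgτ (hFπ τ) hw)
  rw [abs_le] at hστ ⊢
  constructor <;> linarith

end Fibers

/-! ### Grid cells -/

lemma Ik_eq_preimage_gridIdx {k : ℕ} (hk : 0 < k) (i : Fin k) :
    Ik k i = gridIdx k hk ⁻¹' {i} := by
  ext u
  have hk' : (0 : ℝ) < k := by exact_mod_cast hk
  have hu : 0 ≤ (u : ℝ) * k := mul_nonneg u.2.1 hk'.le
  have hle : (i : ℝ) / k ≤ u ↔ (i : ℕ) ≤ ⌊(u : ℝ) * k⌋₊ := by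
    rw [div_le_iff₀ hk', Nat.le_floor_iff hu]
  have hlt : (u : ℝ) < ((i : ℝ) + 1) / k ↔ ⌊(u : ℝ) * k⌋₊ < (i : ℕ) + 1 := by
    rw [lt_div_iff₀ hk', Nat.floor_lt hu]
    push_cast
    rfl
  have hidx : gridIdx k hk u = i ↔ min ⌊(u : ℝ) * k⌋₊ (k - 1) = i := Fin.ext_iff
  have hik := i.isLt
  rw [Set.mem_preimage, Set.mem_singleton_iff, hidx, Ik]
  split_ifs with h
  · simp only [Set.mem_preimage, Set.mem_Icc, hle, u.2.2, and_true]
    omega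
  · simp only [Set.mem_preimage, Set.mem_Ico, hle, hlt]
    omega

lemma measurableSet_Ik {k : ℕ} (i : Fin k) : MeasurableSet (Ik k i) := by
  unfold Ik
  split_ifs
  exacts [measurable_subtype_coe measurableSet_Icc, measurable_subtype_coe measurableSet_Ico]

lemma measurable_gridIdx {k : ℕ} (hk : 0 < k) : Measurable (gridIdx k hk) :=
  measurable_to_countable' fun i => Ik_eq_preimage_gridIdx hk i ▸ measurableSet_Ik i

lemma preimage_gridIdx_prodMap {k : ℕ} (hk : 0 < k) (c : Fin k × Fin k) :
    Prod.map (gridIdx k hk) (gridIdx k hk) ⁻¹' {c} = Ik k c.1 ×ˢ Ik k c.2 := by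
  rw [Ik_eq_preimage_gridIdx hk, Ik_eq_preimage_gridIdx hk, Set.prod_preimage_eq,
    Set.singleton_prod_singleton]
  rfl

lemma pairwise_disjoint_Ik (k : ℕ) : Pairwise (Function.onFun Disjoint (Ik k)) := by
  intro i j hij
  simp only [Function.onFun, Ik_eq_preimage_gridIdx i.pos]
  exact Disjoint.preimage _ (by simpa using hij)

lemma iUnion_Ik {k : ℕ} (hk : 0 < k) : ⋃ i, Ik k i = Set.univ := by
  simp only [Ik_eq_preimage_gridIdx hk, Set.iUnion_eq_univ_iff]
  exact fun u => ⟨gridIdx k hk u, rfl⟩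

lemma volume_real_Ik {k : ℕ} (i : Fin k) :
    (volume : Measure unitInterval).real (Ik k i) = 1 / k := by
  have hk : (0 : ℝ) < k := by exact_mod_cast i.pos
  have hi : (i : ℝ) + 1 ≤ k := by exact_mod_cast i.isLt
  have h0 : (0 : ℝ) ≤ i / k := by positivity
  have h1 : ((i : ℝ) + 1) / k ≤ 1 := (div_le_one hk).2 hi
  have hcoe {s : Set ℝ} (hs : MeasurableSet s) (hsub : s ⊆ Set.Icc 0 1) :
      (volume : Measure unitInterval).real (Subtype.val ⁻¹' s) = volume.real s := by
    rw [unitInterval.measurePreserving_coe.measureReal_preimage hs.nullMeasurableSet,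
      measureReal_restrict_apply hs, Set.inter_eq_left.2 hsub]
  unfold Ik
  split_ifs with h
  · have hik : (i : ℝ) + 1 = k := by exact_mod_cast h
    rw [hcoe measurableSet_Icc (Set.Icc_subset_Icc_left h0),
      Real.volume_real_Icc_of_le ((div_le_one hk).2 (by linarith)), one_sub_div hk.ne', ← hik,
      add_sub_cancel_left]
  · rw [hcoe measurableSet_Ico ((Set.Ico_subset_Ico h0 h1).trans Set.Ico_subset_Icc_self),
      Real.volume_real_Ico_of_le (by gcongr; linarith), ← sub_div, add_sub_cancel_left]

/-- The left endpoint `i/k` of the interval `I_i`, the sample point of the cell `I_i`. -/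
def gridPt {k : ℕ} (i : Fin k) : unitInterval :=
  ⟨(i : ℝ) / k, unitInterval.div_mem (Nat.cast_nonneg _) (Nat.cast_nonneg _)
    (by exact_mod_cast i.isLt.le)⟩

lemma dist_gridPt_le {k : ℕ} {i : Fin k} {u : unitInterval} (hu : u ∈ Ik k i) :
    dist u (gridPt i) ≤ 1 / k := by
  have hk : (0 : ℝ) < k := by exact_mod_cast i.pos
  have hbounds : (i : ℝ) / k ≤ u ∧ (u : ℝ) ≤ (i + 1) / k := by
    unfold Ik at hu
    split_ifs at hu with h
    · refine ⟨hu.1, hu.2.trans_eq ?_⟩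
      rw [eq_div_iff hk.ne', one_mul]
      exact_mod_cast h.symm
    · exact ⟨hu.1, hu.2.le⟩
  rw [Subtype.dist_eq, gridPt, Real.dist_eq, abs_of_nonneg (sub_nonneg.2 hbounds.1),
    sub_le_iff_le_add, ← add_div, add_comm 1]
  exact hbounds.2

/-- Two measures on the square are `k`-close if they nearly agree on all cells `I_i × I_j`.
The tolerance `1/k³` makes the total error over the `k²` cells tend to `0`. -/
def CellClose (k : ℕ) (σ τ : Measure Sq) : Prop :=
  ∀ i j, |σ.real (Ik k i ×ˢ Ik k j) - τ.real (Ik k i ×ˢ Ik k j)| ≤ 1 / (k : ℝ) ^ 3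

lemma CellClose.abs_integral_sub_le {k : ℕ} (hk : 0 < k) {σ τ : Measure Sq}
    [IsProbabilityMeasure σ] [IsProbabilityMeasure τ] (h : CellClose k σ τ)
    (g : BoundedContinuousFunction Sq ℝ) {w : ℝ}
    (hw : ∀ p q, dist p q ≤ 1 / k → |g p - g q| ≤ w) :
    |∫ p, g p ∂σ - ∫ p, g p ∂τ| ≤ 2 * w + ‖g‖ / k := by
  have hmem (u : unitInterval) : u ∈ Ik k (gridIdx k hk u) := by
    rw [Ik_eq_preimage_gridIdx hk]
    rfl
  have hcells := abs_integral_sub_integral_le_of_fibers (δ := 1 / (k : ℝ) ^ 3) (C := ‖g‖)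
    (F := fun c => g (gridPt c.1, gridPt c.2))
    ((measurable_gridIdx hk).prodMap (measurable_gridIdx hk)) (g.integrable σ) (g.integrable τ)
    (fun p => hw _ _ (max_le (dist_gridPt_le (hmem p.1)) (dist_gridPt_le (hmem p.2))))
    (fun c => g.norm_coe_le_norm _)
    (fun c => by simpa only [preimage_gridIdx_prodMap] using h c.1 c.2)
  refine hcells.trans_eq ?_
  simp only [Fintype.card_prod, Fintype.card_fin, Nat.cast_mul]
  field_simp

/-! ### The compact space of s-graphons -/

instance (μ : SGraphon) : IsProbabilityMeasure μ.toMeasure :=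
  inferInstanceAs (IsProbabilityMeasure (μ.1 : Measure Sq))

lemma SGraphon.toMeasure_injective : Function.Injective SGraphon.toMeasure :=
  Subtype.val_injective.comp Subtype.val_injective

instance : CompactSpace SGraphon := by
  have hmap : Continuous fun μ : ProbabilityMeasure Sq =>
      μ.map (continuous_swap (X := unitInterval)).measurable.aemeasurable :=
    ProbabilityMeasure.continuous_map continuous_swap
  have hclosed : IsClosed {μ : ProbabilityMeasure Sq | IsSymmSq (μ : Measure Sq)} := by
    convert isClosed_eq hmap continuous_id using 1
    ext μ
    exact (Subtype.ext_iff (a1 := μ.map continuous_swap.measurable.aemeasurable) (a2 := μ)).symm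
  exact isCompact_iff_compactSpace.1 hclosed.isCompact

lemma SGraphon.continuous_integral (g : BoundedContinuousFunction Sq ℝ) :
    Continuous fun μ : SGraphon => ∫ p, g p ∂μ.toMeasure :=
  (ProbabilityMeasure.continuous_integral_boundedContinuousFunction g).comp continuous_subtype_val

lemma eventually_cellClose_abs_integral_sub_le (g : BoundedContinuousFunction Sq ℝ) {ε : ℝ}
    (hε : 0 < ε) : ∀ᶠ k : ℕ in atTop, ∀ σ τ : Measure Sq, IsProbabilityMeasure σ →
      IsProbabilityMeasure τ → CellClose k σ τ → |∫ p, g p ∂σ - ∫ p, g p ∂τ| < ε := by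
  obtain ⟨d, hd, hgd⟩ := Metric.uniformContinuous_iff.1
    (CompactSpace.uniformContinuous_of_continuous g.continuous) (ε / 4) (by positivity)
  have hnorm : ∀ᶠ k : ℕ in atTop, ‖g‖ / k < ε / 4 :=
    (tendsto_const_div_atTop_nhds_zero_nat ‖g‖).eventually_lt_const (by positivity)
  have hmesh : ∀ᶠ k : ℕ in atTop, 1 / (k : ℝ) < d :=
    tendsto_one_div_atTop_nhds_zero_nat.eventually_lt_const hd
  filter_upwards [hnorm, hmesh, eventually_gt_atTop 0] with k hnorm hmesh hk σ τ _ _ h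
  linarith [h.abs_integral_sub_le hk g fun p q hpq => (hgd (hpq.trans_lt hmesh)).le]

lemma eventually_cellClose_mem {U : Set (SGraphon × SGraphon)}
    (hU : U ∈ 𝓝ˢ (Set.diagonal SGraphon)) :
    ∀ᶠ k in atTop, ∀ σ τ : SGraphon, CellClose k σ.toMeasure τ.toMeasure → (σ, τ) ∈ U := by
  let T (k : ℕ) : Set (SGraphon × SGraphon) := {p | CellClose k p.1.toMeasure p.2.toMeasure}
  have hT : Tendsto T atTop (⨅ g : BoundedContinuousFunction Sq ℝ, comap
      (fun p : SGraphon × SGraphon => ∫ q, g q ∂p.1.toMeasure - ∫ q, g q ∂p.2.toMeasure)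
      (𝓝 0)).smallSets := by
    simp only [smallSets_iInf, smallSets_comap_eq_comap_image, tendsto_iInf, tendsto_comap_iff,
      Metric.nhds_basis_ball.smallSets.tendsto_right_iff]
    intro g ε hε
    filter_upwards [eventually_cellClose_abs_integral_sub_le g hε] with k hk
    rintro _ ⟨p, hp, rfl⟩
    simpa using hk _ _ inferInstance inferInstance hp
  have hsep (σ τ : SGraphon) (h : ∀ g : BoundedContinuousFunction Sq ℝ,
      ∫ q, g q ∂σ.toMeasure = ∫ q, g q ∂τ.toMeasure) : σ = τ :=
    SGraphon.toMeasure_injective (ext_of_forall_integral_eq_of_IsFiniteMeasure h)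
  filter_upwards [tendsto_smallSets_iff.1 hT U
    (iInf_comap_sub_le_nhdsSet_diagonal SGraphon.continuous_integral hsep hU)] with k hk σ τ h
  exact hk h

/-! ### Measures on the square -/

lemma real_withDensity_ofReal {X : Type*} [MeasurableSpace X] {μ : Measure X} {d : X → ℝ}
    (hd : Integrable d μ) (hd0 : 0 ≤ d) {s : Set X} (hs : MeasurableSet s) :
    (μ.withDensity fun x => ENNReal.ofReal (d x)).real s = ∫ x in s, d x ∂μ := by
  rw [measureReal_def, withDensity_apply _ hs, ← ofReal_integral_eq_lintegral_ofReal
    hd.integrableOn (Eventually.of_forall hd0), ENNReal.toReal_ofReal (integral_nonneg hd0)]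

lemma isSymmSq_withDensity {d : Sq → ENNReal} (hd : ∀ p, d p.swap = d p) :
    IsSymmSq (volume.withDensity d) := by
  have hswap : MeasurePreserving (Prod.swap : Sq → Sq) := Measure.measurePreserving_swap
  ext s hs
  rw [Measure.map_apply measurable_swap hs, withDensity_apply _ (measurable_swap hs),
    withDensity_apply _ hs, ← hswap.setLIntegral_comp_preimage_emb
      MeasurableEquiv.prodComm.measurableEmbedding d s]
  simp only [hd]

lemma IsSymmSq.integral_comp_swap {ν : Measure Sq} (hν : IsSymmSq ν) (g : Sq → ℝ) :
    ∫ q, g q.swap ∂ν = ∫ q, g q ∂ν := by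
  conv_rhs => rw [← hν]
  exact (MeasurableEquiv.prodComm.measurableEmbedding.integral_map g).symm

section FstMulSnd

variable {X Y : Type*} [MeasurableSpace X] [MeasurableSpace Y] {ν : Measure (X × Y)}
  [IsFiniteMeasure ν] {a a' : X → ℝ} {b b' : Y → ℝ}

lemma integrable_fst_mul_snd (ha : Measurable a) (hb : Measurable b)
    (ha01 : ∀ x, a x ∈ unitInterval) (hb01 : ∀ y, b y ∈ unitInterval) :
    Integrable (fun p => a p.1 * b p.2) ν :=
  .of_mem_Icc 0 1 (by fun_prop) (.of_forall fun _ => unitInterval.mul_mem (ha01 _) (hb01 _))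

lemma integrable_abs_sub {m : Measure X} [IsFiniteMeasure m] (ha : Measurable a)
    (ha' : Measurable a') (ha01 : ∀ x, a x ∈ unitInterval) (ha'01 : ∀ x, a' x ∈ unitInterval) :
    Integrable (fun x => |a x - a' x|) m :=
  .of_mem_Icc 0 1 (by fun_prop) (.of_forall fun x => ⟨abs_nonneg _, abs_sub_le_iff.2
    ⟨by linarith [(ha01 x).2, (ha'01 x).1], by linarith [(ha01 x).1, (ha'01 x).2]⟩⟩)

lemma abs_integral_mul_sub_integral_mul_le (ha : Measurable a) (ha' : Measurable a')
    (hb : Measurable b) (hb' : Measurable b') (ha01 : ∀ x, a x ∈ unitInterval)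
    (ha'01 : ∀ x, a' x ∈ unitInterval) (hb01 : ∀ y, b y ∈ unitInterval)
    (hb'01 : ∀ y, b' y ∈ unitInterval) :
    |∫ p, a p.1 * b p.2 ∂ν - ∫ p, a' p.1 * b' p.2 ∂ν| ≤
      ∫ x, |a x - a' x| ∂ν.fst + ∫ y, |b y - b' y| ∂ν.snd := by
  have hA : Integrable (fun p => |a p.1 - a' p.1|) ν :=
    (integrable_abs_sub (m := ν.fst) ha ha' ha01 ha'01).comp_measurable measurable_fst
  have hB : Integrable (fun p => |b p.2 - b' p.2|) ν :=
    (integrable_abs_sub (m := ν.snd) hb hb' hb01 hb'01).comp_measurable measurable_snd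
  have hab := integrable_fst_mul_snd (ν := ν) ha hb ha01 hb01
  have hab' := integrable_fst_mul_snd (ν := ν) ha' hb' ha'01 hb'01
  have hpt (x : X) (y : Y) : |a x * b y - a' x * b' y| ≤ |a x - a' x| + |b y - b' y| := calc
    |a x * b y - a' x * b' y| = |(a x - a' x) * b y + a' x * (b y - b' y)| := by ring_nf
    _ ≤ |a x - a' x| * b y + a' x * |b y - b' y| := by
      refine (abs_add_le _ _).trans_eq ?_
      rw [abs_mul, abs_mul, abs_of_nonneg (hb01 y).1, abs_of_nonneg (ha'01 x).1]
    _ ≤ |a x - a' x| + |b y - b' y| :=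
      add_le_add (mul_le_of_le_one_right (abs_nonneg _) (hb01 y).2)
        (mul_le_of_le_one_left (abs_nonneg _) (ha'01 x).2)
  calc |∫ p, a p.1 * b p.2 ∂ν - ∫ p, a' p.1 * b' p.2 ∂ν|
      ≤ ∫ p, |a p.1 * b p.2 - a' p.1 * b' p.2| ∂ν := by
        rw [← integral_sub hab hab']
        exact abs_integral_le_integral_abs
    _ ≤ ∫ p, (|a p.1 - a' p.1| + |b p.2 - b' p.2|) ∂ν :=
        integral_mono (hab.sub hab').abs (hA.add hB) fun p => hpt p.1 p.2
    _ = ∫ x, |a x - a' x| ∂ν.fst + ∫ y, |b y - b' y| ∂ν.snd := by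
        rw [integral_add hA hB, Measure.fst, Measure.snd,
          integral_map measurable_fst.aemeasurable (by fun_prop),
          integral_map measurable_snd.aemeasurable (by fun_prop)]

end FstMulSnd

/-! ### The s-graphons `Φ(f, ν)` -/

namespace FairlyDistributed

variable {f : Sq → ℝ}

lemma integrable_comp (hf : FairlyDistributed f) {α : Type*} [MeasurableSpace α] {g : α → Sq}
    (hg : Measurable g) (μ : Measure α) [IsFiniteMeasure μ] : Integrable (fun a => f (g a)) μ :=
  have ⟨C, hC⟩ := hf.bounded
  .of_mem_Icc 0 C (hf.measurable.comp hg).aemeasurable (.of_forall fun _ => ⟨hf.nonneg _, hC _⟩)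

lemma integrable_mul_comp (hf : FairlyDistributed f) {α : Type*} [MeasurableSpace α]
    {g h : α → Sq} (hg : Measurable g) (hh : Measurable h) (μ : Measure α) [IsFiniteMeasure μ] :
    Integrable (fun a => f (g a) * f (h a)) μ :=
  have ⟨_, hC⟩ := hf.bounded
  (hf.integrable_comp hh μ).bdd_mul (hf.measurable.comp hg).aestronglyMeasurable
    (.of_forall fun _ => (Real.norm_of_nonneg (hf.nonneg _)).trans_le (hC _))

lemma real_PhiMeas_prod (hf : FairlyDistributed f) (ν : Measure Sq) [IsFiniteMeasure ν]
    {A B : Set unitInterval} (hA : MeasurableSet A) (hB : MeasurableSet B) :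
    (PhiMeas f ν).real (A ×ˢ B) =
      ∫ q, (∫ u in A, f (q.1, u)) * (∫ v in B, f (q.2, v)) ∂ν := by
  have hint (μ : Measure Sq) [IsFiniteMeasure μ] :
      Integrable (Function.uncurry fun p q : Sq => f (q.1, p.1) * f (q.2, p.2)) (μ.prod ν) :=
    hf.integrable_mul_comp (g := fun x : Sq × Sq => (x.2.1, x.1.1))
      (h := fun x : Sq × Sq => (x.2.2, x.1.2)) (by fun_prop) (by fun_prop) _
  have hnonneg : 0 ≤ phiFn f ν :=
    fun _ => integral_nonneg fun _ => mul_nonneg (hf.nonneg _) (hf.nonneg _)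
  rw [PhiMeas, real_withDensity_ofReal (d := phiFn f ν) (hint volume).integral_prod_left hnonneg
    (hA.prod hB)]
  simp only [phiFn]
  rw [integral_integral_swap (hint _)]
  exact integral_congr_ae (.of_forall fun q =>
    setIntegral_prod_mul (fun u => f (q.1, u)) (fun v => f (q.2, v)) A B)

lemma isProbabilityMeasure_PhiMeas (hf : FairlyDistributed f) (ν : Measure Sq)
    [IsProbabilityMeasure ν] : IsProbabilityMeasure (PhiMeas f ν) := by
  rw [isProbabilityMeasure_iff_real, ← Set.univ_prod_univ,
    hf.real_PhiMeas_prod ν .univ .univ]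
  simp [hf.row]

end FairlyDistributed

lemma IsSymmSq.PhiMeas {ν : Measure Sq} (hν : IsSymmSq ν) (f : Sq → ℝ) :
    IsSymmSq (PhiMeas f ν) := by
  refine isSymmSq_withDensity fun p => congrArg ENNReal.ofReal ?_
  rw [phiFn, phiFn, ← hν.integral_comp_swap]
  simp only [Prod.fst_swap, Prod.snd_swap, mul_comm]

/-- The measure `Φ(f, ν)` as an s-graphon. -/
def SGraphon.phi {f : Sq → ℝ} (hf : FairlyDistributed f) (ν : SGraphon) : SGraphon :=
  ⟨⟨PhiMeas f ν.toMeasure, hf.isProbabilityMeasure_PhiMeas ν.toMeasure⟩, ν.2.PhiMeas f⟩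

/-! ### Fractional partitions and their density matrices -/

namespace IsFracPartition

variable {k : ℕ} {f : Fin k → unitInterval → ℝ}

lemma mem_stdSimplex (hf : IsFracPartition k f) (x : unitInterval) :
    (fun i => f i x) ∈ stdSimplex ℝ (Fin k) :=
  ⟨fun i => hf.2.1 i x, hf.2.2.1 x⟩

lemma mem_unitInterval (hf : IsFracPartition k f) (i : Fin k) (x : unitInterval) :
    f i x ∈ unitInterval :=
  mem_Icc_of_mem_stdSimplex (hf.mem_stdSimplex x) i

lemma integrable (hf : IsFracPartition k f) (i : Fin k) (m : Measure unitInterval)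
    [IsFiniteMeasure m] : Integrable (f i) m :=
  .of_mem_Icc 0 1 (hf.1 i).aemeasurable (.of_forall (hf.mem_unitInterval i))

end IsFracPartition

/-- The density matrix `(∫ f_i(x) f_j(y) dν(x,y))_{i,j}` of a tuple of functions `f`. -/
def densityMatrix {k : ℕ} (f : Fin k → unitInterval → ℝ) (ν : Measure Sq) :
    Matrix (Fin k) (Fin k) ℝ :=
  fun i j => ∫ p, f i p.1 * f j p.2 ∂ν

lemma IsFracPartition.densityMatrix_mem_Mstar {k : ℕ} {f : Fin k → unitInterval → ℝ}
    (hf : IsFracPartition k f) {ν : Measure Sq} [IsProbabilityMeasure ν] (hν : IsSymmSq ν) :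
    densityMatrix f ν ∈ Mstar k := by
  refine ⟨?_, fun i j => integral_nonneg fun _ => mul_nonneg (hf.2.1 _ _) (hf.2.1 _ _), ?_⟩
  · refine Matrix.IsSymm.ext fun i j => ?_
    rw [densityMatrix, densityMatrix, ← hν.integral_comp_swap]
    simp only [Prod.fst_swap, Prod.snd_swap, mul_comm]
  · have hint (i j : Fin k) : Integrable (fun p : Sq => f i p.1 * f j p.2) ν :=
      integrable_fst_mul_snd (hf.1 i) (hf.1 j) (hf.mem_unitInterval i) (hf.mem_unitInterval j)
    calc ∑ i, ∑ j, ∫ p, f i p.1 * f j p.2 ∂ν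
        = ∫ p, ∑ i, ∑ j, f i p.1 * f j p.2 ∂ν := by
          rw [integral_finsetSum _ fun i _ => integrable_finsetSum _ fun j _ => hint i j]
          exact Finset.sum_congr rfl fun i _ => (integral_finsetSum _ fun j _ => hint i j).symm
      _ = 1 := by simp [← Finset.mul_sum, hf.2.2.1]

lemma isClosed_Mstar (k : ℕ) : IsClosed (Mstar k) := by
  have hsymm : IsClosed {M : Matrix (Fin k) (Fin k) ℝ | M.IsSymm} :=
    isClosed_eq continuous_id.matrix_transpose continuous_id
  have hnonneg : IsClosed {M : Matrix (Fin k) (Fin k) ℝ | ∀ i j, 0 ≤ M i j} :=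
    isClosed_Ici (α := Fin k → Fin k → ℝ) (a := 0)
  have hsum : IsClosed {M : Matrix (Fin k) (Fin k) ℝ | ∑ i, ∑ j, M i j = 1} :=
    isClosed_eq (by fun_prop) continuous_const
  exact hsymm.inter (hnonneg.inter hsum)

lemma kShape_subset_Mstar {ν : Measure Sq} [IsProbabilityMeasure ν] (hν : IsSymmSq ν) (k : ℕ) :
    kShape ν k ⊆ Mstar k := by
  refine closure_minimal ?_ (isClosed_Mstar k)
  rintro M ⟨f, hf, hM⟩
  obtain rfl : M = densityMatrix f ν := Matrix.ext hM
  exact hf.densityMatrix_mem_Mstar hν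

/-- The averages `x ↦ ∫_{I_i} f(x, u) du` of a kernel over the grid intervals. For fairly
distributed `f` they form a fractional partition whose density matrix is the matrix of cell
masses of `Φ(f, ν)`. -/
def gridAverage (k : ℕ) (f : Sq → ℝ) (i : Fin k) (x : unitInterval) : ℝ :=
  ∫ u in Ik k i, f (x, u)

lemma isFracPartition_gridAverage {k : ℕ} (hk : 0 < k) {f : Sq → ℝ} (hf : FairlyDistributed f) :
    IsFracPartition k (gridAverage k f) := by
  refine ⟨fun i => ?_, fun i x => integral_nonneg fun _ => hf.nonneg _, fun x => ?_, fun i => ?_⟩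
  · exact hf.measurable.stronglyMeasurable.integral_prod_right'.measurable
  · have hint (i : Fin k) : IntegrableOn (fun u => f (x, u)) (Ik k i) :=
      hf.integrable_comp (by fun_prop) _
    simp only [gridAverage]
    rw [← integral_iUnion_fintype measurableSet_Ik (pairwise_disjoint_Ik k) hint, iUnion_Ik hk,
      setIntegral_univ, hf.row]
  · simp only [gridAverage]
    rw [integral_integral_swap (hf.integrable_comp (g := id) measurable_id _)]
    simp only [hf.col, setIntegral_one_eq_measureReal, volume_real_Ik]

lemma FairlyDistributed.real_PhiMeas_Ik {f : Sq → ℝ} (hf : FairlyDistributed f) (ν : Measure Sq)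
    [IsFiniteMeasure ν] {k : ℕ} (i j : Fin k) :
    (PhiMeas f ν).real (Ik k i ×ˢ Ik k j) = densityMatrix (gridAverage k f) ν i j :=
  hf.real_PhiMeas_prod ν (measurableSet_Ik i) (measurableSet_Ik j)

/-! ### The s-graphon of a matrix -/

lemma pos_of_mem_Mstar {k : ℕ} {M : Matrix (Fin k) (Fin k) ℝ} (hM : M ∈ Mstar k) : 0 < k := by
  rcases Nat.eq_zero_or_pos k with rfl | hk
  · simpa using hM.2.2
  · exact hk

lemma real_muM {k : ℕ} (hk : 0 < k) {M : Matrix (Fin k) (Fin k) ℝ} (hM : ∀ i j, 0 ≤ M i j)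
    {s : Set Sq} (hs : MeasurableSet s) :
    (muM M).real s = ∫ p in s, (k : ℝ) ^ 2 * M (gridIdx k hk p.1) (gridIdx k hk p.2) := by
  have hint : Integrable fun p : Sq => (k : ℝ) ^ 2 * M (gridIdx k hk p.1) (gridIdx k hk p.2) :=
    Integrable.of_finite (f := fun c : Fin k × Fin k => (k : ℝ) ^ 2 * M c.1 c.2).comp_measurable
      ((measurable_gridIdx hk).prodMap (measurable_gridIdx hk))
  rw [muM, dif_pos hk]
  exact real_withDensity_ofReal hint (fun p => mul_nonneg (sq_nonneg _) (hM _ _)) hs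

lemma real_muM_Ik {k : ℕ} {M : Matrix (Fin k) (Fin k) ℝ} (hM : ∀ i j, 0 ≤ M i j) (i j : Fin k) :
    (muM M).real (Ik k i ×ˢ Ik k j) = M i j := by
  have hcell : MeasurableSet (Ik k i ×ˢ Ik k j) := (measurableSet_Ik i).prod (measurableSet_Ik j)
  have hk : (k : ℝ) ≠ 0 := by exact_mod_cast i.pos.ne'
  rw [real_muM i.pos hM hcell, setIntegral_congr_fun (g := fun _ => (k : ℝ) ^ 2 * M i j) hcell
    fun p hp => ?_]
  · rw [setIntegral_const, Measure.volume_eq_prod, measureReal_prod_prod, volume_real_Ik,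
      volume_real_Ik, smul_eq_mul]
    field_simp
  · rw [Ik_eq_preimage_gridIdx i.pos, Ik_eq_preimage_gridIdx i.pos] at hp
    simp only [show gridIdx k i.pos p.1 = i from hp.1, show gridIdx k i.pos p.2 = j from hp.2]

lemma isProbabilityMeasure_muM {k : ℕ} {M : Matrix (Fin k) (Fin k) ℝ} (hM : M ∈ Mstar k) :
    IsProbabilityMeasure (muM M) := by
  have hk := pos_of_mem_Mstar hM
  rw [isProbabilityMeasure_iff_real, real_muM hk hM.2.1 .univ, setIntegral_univ]
  refine (integral_comp_eq_sum_fibers ((measurable_gridIdx hk).prodMap (measurable_gridIdx hk))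
    volume fun c => (k : ℝ) ^ 2 * M c.1 c.2).trans ?_
  have hk' : (k : ℝ) ≠ 0 := by exact_mod_cast hk.ne'
  rw [← hM.2.2, Fintype.sum_prod_type]
  refine Finset.sum_congr rfl fun i _ => Finset.sum_congr rfl fun j _ => ?_
  rw [preimage_gridIdx_prodMap, Measure.volume_eq_prod, measureReal_prod_prod, volume_real_Ik,
    volume_real_Ik]
  field_simp

lemma isSymmSq_muM {k : ℕ} {M : Matrix (Fin k) (Fin k) ℝ} (hM : M ∈ Mstar k) :
    IsSymmSq (muM M) := by
  rw [muM, dif_pos (pos_of_mem_Mstar hM)]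
  refine isSymmSq_withDensity fun p => ?_
  rw [Prod.fst_swap, Prod.snd_swap, hM.1.apply]

/-- The measure `μ_M` of a matrix `M ∈ M_k^*` as an s-graphon. -/
def SGraphon.ofMatrix {k : ℕ} {M : Matrix (Fin k) (Fin k) ℝ} (hM : M ∈ Mstar k) : SGraphon :=
  ⟨⟨muM M, isProbabilityMeasure_muM hM⟩, isSymmSq_muM hM⟩

/-! ### Approximation by continuous fractional partitions -/

lemma norm_sub_inv_sum_smul_le {ι : Type*} [Fintype ι] {a p : ι → ℝ} (ha : a ∈ stdSimplex ℝ ι)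
    (hp : ∀ i, 0 ≤ p i) (hsum : 0 < ∑ i, p i) :
    ‖a - (∑ i, p i)⁻¹ • p‖ ≤ (1 + Fintype.card ι) * ‖a - p‖ := by
  have hcoord (i : ι) : |a i - p i| ≤ ‖a - p‖ := norm_le_pi_norm (a - p) i
  have hdefect : |∑ i, p i - 1| ≤ Fintype.card ι * ‖a - p‖ := by
    rw [← ha.2, ← Finset.sum_sub_distrib, ← nsmul_eq_mul]
    exact (Finset.abs_sum_le_sum_abs _ _).trans (Finset.sum_le_card_nsmul _ _ _ fun i _ =>
      (abs_sub_comm _ _).trans_le (hcoord i))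
  refine (pi_norm_le_iff_of_nonneg (by positivity)).2 fun i => ?_
  have hle : p i / ∑ j, p j ≤ 1 :=
    (div_le_one hsum).2 (Finset.single_le_sum (fun j _ => hp j) (Finset.mem_univ i))
  calc |a i - (∑ j, p j)⁻¹ * p i|
      = |(a i - p i) + p i / (∑ j, p j) * (∑ j, p j - 1)| := by
        congr 1
        field_simp
        ring
    _ ≤ |a i - p i| + p i / (∑ j, p j) * |∑ j, p j - 1| := by
        refine (abs_add_le _ _).trans_eq ?_
        rw [abs_mul, abs_of_nonneg (div_nonneg (hp i) hsum.le)]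
    _ ≤ ‖a - p‖ + Fintype.card ι * ‖a - p‖ :=
        add_le_add (hcoord i) ((mul_le_of_le_one_left (abs_nonneg _) hle).trans hdefect)
    _ = (1 + Fintype.card ι) * ‖a - p‖ := by ring

lemma nonempty_of_mem_stdSimplex {ι : Type*} [Fintype ι] {a : ι → ℝ} (ha : a ∈ stdSimplex ℝ ι) :
    Nonempty ι :=
  have ⟨i, _, _⟩ := Finset.exists_ne_zero_of_sum_ne_zero (ha.2.trans_ne one_ne_zero)
  ⟨i⟩

/-- A continuous map from `ι → ℝ` to the standard simplex that moves points of the simplex by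
`O(δ)`: clip at `0`, add `δ` to keep the coordinate sum positive, and normalise. -/
def clipNormalize {ι : Type*} [Fintype ι] (δ : ℝ) (v : ι → ℝ) : ι → ℝ :=
  (∑ i, (max (v i) 0 + δ))⁻¹ • fun i => max (v i) 0 + δ

section ClipNormalize

variable {ι : Type*} [Fintype ι] [Nonempty ι] {δ : ℝ}

lemma sum_max_zero_add_pos (hδ : 0 < δ) (v : ι → ℝ) : 0 < ∑ i, (max (v i) 0 + δ) :=
  Finset.sum_pos (fun _ _ => by positivity) Finset.univ_nonempty

lemma clipNormalize_mem_stdSimplex (hδ : 0 < δ) (v : ι → ℝ) :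
    clipNormalize δ v ∈ stdSimplex ℝ ι := by
  have hsum := sum_max_zero_add_pos hδ v
  refine ⟨fun i => mul_nonneg (inv_nonneg.2 hsum.le) (by positivity), ?_⟩
  simp only [clipNormalize, Pi.smul_apply, smul_eq_mul, ← Finset.mul_sum,
    inv_mul_cancel₀ hsum.ne']

lemma continuous_clipNormalize (hδ : 0 < δ) : Continuous (clipNormalize δ : (ι → ℝ) → ι → ℝ) :=
  (Continuous.inv₀ (by fun_prop) fun v => (sum_max_zero_add_pos hδ v).ne').smul (by fun_prop)

lemma norm_sub_clipNormalize_le (hδ : 0 < δ) {a : ι → ℝ} (ha : a ∈ stdSimplex ℝ ι) (v : ι → ℝ) :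
    ‖a - clipNormalize δ v‖ ≤ (1 + Fintype.card ι) * (‖a - v‖ + δ) := by
  have hclip : ‖a - fun i => max (v i) 0 + δ‖ ≤ ‖a - v‖ + δ := by
    refine (pi_norm_le_iff_of_nonneg (by positivity)).2 fun i => ?_
    have hmax := abs_max_sub_max_le_abs (a i) (v i) 0
    rw [max_eq_left (ha.1 i)] at hmax
    have hcoord : |a i - v i| ≤ ‖a - v‖ := norm_le_pi_norm (a - v) i
    have htri := abs_sub (a i - max (v i) 0) δ
    rw [abs_of_pos hδ, sub_sub] at htri
    exact htri.trans (by linarith)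
  exact (norm_sub_inv_sum_smul_le ha (fun i => by positivity) (sum_max_zero_add_pos hδ v)).trans
    (by gcongr)

end ClipNormalize

lemma integrable_of_forall_mem_stdSimplex {X ι : Type*} [MeasurableSpace X] [Fintype ι]
    {m : Measure X} [IsFiniteMeasure m] {f : X → ι → ℝ} (hf : Measurable f)
    (hmem : ∀ x, f x ∈ stdSimplex ℝ ι) : Integrable f m :=
  .of_bound hf.aestronglyMeasurable 1 <| .of_forall fun x =>
    (pi_norm_le_iff_of_nonneg zero_le_one).2 fun i =>
      have hi := mem_Icc_of_mem_stdSimplex (hmem x) i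
      (Real.norm_of_nonneg hi.1).trans_le hi.2

lemma exists_continuous_stdSimplex_approx {X ι : Type*} [Fintype ι] [Nonempty ι]
    [TopologicalSpace X] [NormalSpace X] [MeasurableSpace X] [BorelSpace X] {m : Measure X}
    [IsFiniteMeasure m] [m.WeaklyRegular] {f : X → ι → ℝ} (hf : Measurable f)
    (hmem : ∀ x, f x ∈ stdSimplex ℝ ι) {e : ℝ} (he : 0 < e) :
    ∃ b : X → ι → ℝ, Continuous b ∧ (∀ x, b x ∈ stdSimplex ℝ ι) ∧ ∫ x, ‖f x - b x‖ ∂m ≤ e := by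
  set L : ℝ := 1 + Fintype.card ι
  set δ : ℝ := e / (L * (1 + m.real Set.univ)) with hδ
  have hL0 : 0 < L := by positivity
  have hδ0 : 0 < δ := by positivity
  have hf_int : Integrable f m := integrable_of_forall_mem_stdSimplex hf hmem
  obtain ⟨a, hfa, ha_int⟩ := hf_int.exists_boundedContinuous_integral_sub_le hδ0
  have hb : Continuous fun x => clipNormalize δ (a x) :=
    (continuous_clipNormalize hδ0).comp a.continuous
  have hb_mem (x : X) := clipNormalize_mem_stdSimplex hδ0 (a x)
  have hb_int := integrable_of_forall_mem_stdSimplex (m := m) hb.measurable hb_mem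
  have hfa_int : Integrable (fun x => ‖f x - a x‖) m := (hf_int.sub ha_int).norm
  refine ⟨_, hb, hb_mem, ?_⟩
  calc ∫ x, ‖f x - clipNormalize δ (a x)‖ ∂m
      ≤ ∫ x, L * (‖f x - a x‖ + δ) ∂m :=
        integral_mono (hf_int.sub hb_int).norm ((hfa_int.add (integrable_const δ)).const_mul L)
          fun x => norm_sub_clipNormalize_le hδ0 (hmem x) (a x)
    _ = L * (∫ x, ‖f x - a x‖ ∂m + m.real Set.univ * δ) := by
        rw [integral_const_mul, integral_add hfa_int (integrable_const _), integral_const,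
          smul_eq_mul]
    _ ≤ L * (δ + m.real Set.univ * δ) := by gcongr
    _ = e := by
        rw [hδ]
        field_simp

/-- An affine correction of a partition of unity `b` on `[0,1]` with integrals within `e` of `1/k`
that makes all integrals equal to `1/k`. Shrinking `b` by the factor `1 - k e` leaves enough room
for the added constants to be non-negative. -/
def recenter {k : ℕ} (e : ℝ) (b : unitInterval → Fin k → ℝ) (i : Fin k) (x : unitInterval) : ℝ :=
  (1 - k * e) * b x i + (1 / k - (1 - k * e) * ∫ y, b y i)

section Recenter

variable {k : ℕ} {e : ℝ} {b : unitInterval → Fin k → ℝ}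

lemma continuous_recenter (hb : Continuous b) (i : Fin k) : Continuous (recenter e b i) := by
  unfold recenter
  fun_prop

lemma isFracPartition_recenter (hb : Measurable b) (hmem : ∀ x, b x ∈ stdSimplex ℝ (Fin k))
    (hke : k * e ≤ 1) (he : ∀ i, |1 / k - ∫ x, b x i| ≤ e) : IsFracPartition k (recenter e b) := by
  have hbi (i : Fin k) : Measurable fun x => b x i := measurable_pi_iff.1 hb i
  have hint (i : Fin k) : Integrable fun x => b x i :=
    (integrable_of_forall_mem_stdSimplex hb hmem).eval i
  refine ⟨fun i => ((hbi i).const_mul _).add_const _, fun i x => ?_, fun x => ?_, fun i => ?_⟩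
  · have hk : (0 : ℝ) < k := by exact_mod_cast i.pos
    have hint_le : ∫ y, b y i ≤ 1 / k + e := by linarith [(abs_le.1 (he i)).1]
    have hconst : (1 - k * e) * ∫ y, b y i ≤ 1 / k := calc
      (1 - k * e) * ∫ y, b y i ≤ (1 - k * e) * (1 / k + e) :=
        mul_le_mul_of_nonneg_left hint_le (sub_nonneg.2 hke)
      _ = 1 / k - k * e ^ 2 := by
        field_simp
        ring
      _ ≤ 1 / k := sub_le_self _ (by positivity)
    exact add_nonneg (mul_nonneg (sub_nonneg.2 hke) ((hmem x).1 i)) (sub_nonneg.2 hconst)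
  · have hk : (k : ℝ) ≠ 0 := by
      exact_mod_cast (Fin.pos_iff_nonempty.2 (nonempty_of_mem_stdSimplex (hmem x))).ne'
    have hsum : ∑ i, ∫ y, b y i = 1 := by
      rw [← integral_finsetSum _ fun i _ => hint i]
      simp [fun y => (hmem y).2]
    simp only [recenter, Finset.sum_add_distrib, Finset.sum_sub_distrib, ← Finset.mul_sum, hsum,
      (hmem x).2, Finset.sum_const, Finset.card_univ, Fintype.card_fin, nsmul_eq_mul]
    field_simp
    ring
  · simp only [recenter]
    rw [integral_add ((hint i).const_mul _) (integrable_const _), integral_const_mul]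
    simp

lemma abs_sub_recenter_le (hb : Measurable b) (hmem : ∀ x, b x ∈ stdSimplex ℝ (Fin k))
    (he : ∀ i, |1 / k - ∫ x, b x i| ≤ e) (i : Fin k) (x : unitInterval) :
    |b x i - recenter e b i x| ≤ (k + 1) * e := by
  have he0 : 0 ≤ e := (abs_nonneg _).trans (he i)
  have hx := mem_Icc_of_mem_stdSimplex (hmem x) i
  have hI : ∫ y, b y i ∈ Set.Icc (0 : ℝ) 1 := (convex_Icc 0 1).integral_mem isClosed_Icc
    (.of_forall fun y => mem_Icc_of_mem_stdSimplex (hmem y) i)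
    ((integrable_of_forall_mem_stdSimplex hb hmem).eval i)
  have hdiff : |b x i - ∫ y, b y i| ≤ 1 := abs_sub_le_iff.2
    ⟨by linarith [hx.2, hI.1], by linarith [hx.1, hI.2]⟩
  calc |b x i - recenter e b i x|
      = |k * e * (b x i - ∫ y, b y i) - (1 / k - ∫ y, b y i)| := by
        rw [recenter]
        ring_nf
    _ ≤ k * e * |b x i - ∫ y, b y i| + |1 / k - ∫ y, b y i| := by
        refine (abs_sub _ _).trans_eq ?_
        rw [abs_mul, abs_of_nonneg (by positivity : 0 ≤ k * e)]
    _ ≤ k * e + e := add_le_add (mul_le_of_le_one_right (by positivity) hdiff) (he i)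
    _ = (k + 1) * e := by ring

end Recenter

lemma IsFracPartition.exists_continuous_approx {k : ℕ} {f : Fin k → unitInterval → ℝ}
    (hf : IsFracPartition k f) {m : Measure unitInterval} [IsFiniteMeasure m] (hm : volume ≤ m)
    {η : ℝ} (hη : 0 < η) :
    ∃ c : Fin k → unitInterval → ℝ, IsFracPartition k c ∧ (∀ i, Continuous (c i)) ∧
      ∀ i, ∫ x, |f i x - c i x| ∂m ≤ η := by
  have hk : Nonempty (Fin k) := nonempty_of_mem_stdSimplex (hf.mem_stdSimplex 0)
  set e : ℝ := min (1 / (k + 1)) (η / (1 + (k + 1) * m.real Set.univ))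
  have he0 : 0 < e := lt_min (by positivity) (by positivity)
  have hke : k * e ≤ 1 := by
    have : e * (k + 1) ≤ 1 := (le_div_iff₀ (by positivity)).1 (min_le_left _ _)
    linarith
  have heη : e * (1 + (k + 1) * m.real Set.univ) ≤ η :=
    (le_div_iff₀ (by positivity)).1 (min_le_right _ _)
  obtain ⟨b, hb, hb_mem, hfb⟩ := exists_continuous_stdSimplex_approx (m := m)
    (measurable_pi_iff.2 hf.1) hf.mem_stdSimplex he0
  have hfb_int : Integrable (fun x => (fun i => f i x) - b x) m :=
    (integrable_of_forall_mem_stdSimplex (measurable_pi_iff.2 hf.1) hf.mem_stdSimplex).sub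
      (integrable_of_forall_mem_stdSimplex hb.measurable hb_mem)
  have hfb_coord (i : Fin k) : ∫ x, |f i x - b x i| ∂m ≤ e :=
    (integral_mono (hfb_int.eval i).abs hfb_int.norm fun x =>
      norm_le_pi_norm ((fun i => f i x) - b x) i).trans hfb
  have hb_integral (i : Fin k) : |1 / k - ∫ x, b x i| ≤ e := by
    have hb_int : Integrable b := integrable_of_forall_mem_stdSimplex hb.measurable hb_mem
    rw [← hf.2.2.2 i, ← integral_sub (hf.integrable i _) (hb_int.eval i)]
    exact abs_integral_le_integral_abs.trans ((integral_mono_measure hm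
      (.of_forall fun x => abs_nonneg _) (hfb_int.eval i).abs).trans (hfb_coord i))
  have hc := isFracPartition_recenter hb.measurable hb_mem hke hb_integral
  refine ⟨_, hc, continuous_recenter hb, fun i => ?_⟩
  calc ∫ x, |f i x - recenter e b i x| ∂m
      ≤ ∫ x, (|f i x - b x i| + (k + 1) * e) ∂m :=
        integral_mono ((hf.integrable i m).sub (hc.integrable i m)).abs
          ((hfb_int.eval i).abs.add (integrable_const _)) fun x =>
            (abs_sub_le _ (b x i) _).trans
              (add_le_add_right (abs_sub_recenter_le hb.measurable hb_mem hb_integral i x) _)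
    _ = ∫ x, |f i x - b x i| ∂m + m.real Set.univ * ((k + 1) * e) := by
        refine (integral_add (hfb_int.eval i).abs (integrable_const _)).trans ?_
        simp
    _ ≤ e + m.real Set.univ * ((k + 1) * e) := by gcongr; exact hfb_coord i
    _ ≤ η := by linarith

/-! ### Block kernels -/

lemma isFracPartition_indicator_Ik {k : ℕ} (hk : 0 < k) :
    IsFracPartition k fun i => (Ik k i).indicator fun _ => 1 := by
  refine ⟨fun i => measurable_const.indicator (measurableSet_Ik i),
    fun i => Set.indicator_nonneg fun _ _ => zero_le_one, fun x => ?_, fun i => ?_⟩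
  · classical
    simp [Ik_eq_preimage_gridIdx hk, Set.indicator_apply]
  · rw [integral_indicator (measurableSet_Ik i), setIntegral_one_eq_measureReal, volume_real_Ik]

lemma setIntegral_indicator_Ik {k : ℕ} (a i : Fin k) :
    ∫ u in Ik k a, (Ik k i).indicator (fun _ => (1 : ℝ)) u = if i = a then 1 / (k : ℝ) else 0 := by
  rw [setIntegral_indicator (measurableSet_Ik i), setIntegral_one_eq_measureReal]
  split_ifs with hia
  · rw [hia, Set.inter_self, volume_real_Ik]
  · rw [(pairwise_disjoint_Ik k (Ne.symm hia)).inter_eq, measureReal_empty]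

/-- The kernel `k ∑ i, c_i(x) h_i(y)`. When `h_i` is close to the indicator of `I_i`, its average
over `I_i` is close to `c_i`, so it is a right inverse of `gridAverage` up to a small error. -/
def blockKernel {k : ℕ} (c h : Fin k → unitInterval → ℝ) (p : Sq) : ℝ :=
  k * ∑ i, c i p.1 * h i p.2

section BlockKernel

variable {k : ℕ} {c h : Fin k → unitInterval → ℝ}

lemma continuous_blockKernel (hc : ∀ i, Continuous (c i)) (hh : ∀ i, Continuous (h i)) :
    Continuous (blockKernel c h) := by
  unfold blockKernel
  fun_prop

lemma setIntegral_blockKernel (hh : ∀ i, Integrable (h i)) (A : Set unitInterval)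
    (x : unitInterval) :
    ∫ u in A, blockKernel c h (x, u) = k * ∑ i, c i x * ∫ u in A, h i u := by
  simp only [blockKernel]
  rw [integral_const_mul, integral_finsetSum _ fun i _ => (hh i).integrableOn.const_mul _]
  simp only [integral_const_mul]

lemma fairlyDistributed_blockKernel (hk : 0 < k) (hc : IsFracPartition k c)
    (hh : IsFracPartition k h) : FairlyDistributed (blockKernel c h) where
  measurable := by
    have hc_meas := hc.1
    have hh_meas := hh.1
    unfold blockKernel
    fun_prop
  nonneg _ := mul_nonneg k.cast_nonneg
    (Finset.sum_nonneg fun _ _ => mul_nonneg (hc.2.1 _ _) (hh.2.1 _ _))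
  bounded := ⟨k, fun p => mul_le_of_le_one_right k.cast_nonneg <| calc
    ∑ i, c i p.1 * h i p.2 ≤ ∑ i, c i p.1 := Finset.sum_le_sum fun i _ =>
      mul_le_of_le_one_right (hc.2.1 i _) (hh.mem_unitInterval i _).2
    _ = 1 := hc.2.2.1 _⟩
  row x := by
    rw [← setIntegral_univ, setIntegral_blockKernel fun i => hh.integrable i _]
    simp only [setIntegral_univ, hh.2.2.2]
    rw [← Finset.sum_mul, hc.2.2.1]
    field_simp
  col y := by
    simp only [blockKernel]
    rw [integral_const_mul, integral_finsetSum _ fun i _ => (hc.integrable i _).mul_const _]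
    simp only [integral_mul_const, hc.2.2.2]
    rw [← Finset.mul_sum, hh.2.2.1]
    field_simp

lemma abs_sub_gridAverage_blockKernel_le (hc : IsFracPartition k c)
    (hh : ∀ i, Integrable (h i)) {η : ℝ}
    (hη : ∀ i, ∫ x, |(Ik k i).indicator (fun _ => 1) x - h i x| ≤ η) (a : Fin k)
    (x : unitInterval) : |c a x - gridAverage k (blockKernel c h) a x| ≤ k * η := by
  have hk : (k : ℝ) ≠ 0 := by exact_mod_cast a.pos.ne'
  set J : Fin k → ℝ := fun i => ∫ u in Ik k a, (Ik k i).indicator (fun _ => (1 : ℝ)) u with hJ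
  have hblock : c a x = k * ∑ i, c i x * J i := by
    simp only [hJ, setIntegral_indicator_Ik, mul_ite, mul_zero, Finset.sum_ite_eq',
      Finset.mem_univ, if_true]
    field_simp
  have hclose (i : Fin k) : |J i - ∫ u in Ik k a, h i u| ≤ η := by
    have hind := (isFracPartition_indicator_Ik a.pos).integrable i volume
    rw [hJ, ← integral_sub hind.integrableOn (hh i).integrableOn]
    exact abs_integral_le_integral_abs.trans ((setIntegral_le_integral (hind.sub (hh i)).abs
      (.of_forall fun _ => abs_nonneg _)).trans (hη i))
  rw [gridAverage, setIntegral_blockKernel hh]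
  calc |c a x - k * ∑ i, c i x * ∫ u in Ik k a, h i u|
      = k * |∑ i, c i x * (J i - ∫ u in Ik k a, h i u)| := by
        rw [hblock, ← mul_sub, ← Finset.sum_sub_distrib, abs_mul, Nat.abs_cast]
        simp only [mul_sub]
    _ ≤ k * ∑ i, c i x * η := by
        gcongr
        refine (Finset.abs_sum_le_sum_abs _ _).trans (Finset.sum_le_sum fun i _ => ?_)
        rw [abs_mul, abs_of_nonneg (hc.2.1 i x)]
        exact mul_le_mul_of_nonneg_left (hclose i) (hc.2.1 i x)
    _ = k * η := by rw [← Finset.sum_mul, hc.2.2.1, one_mul]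

end BlockKernel

/-! ### Realising density matrices by continuous kernels -/

section DensityMatrix

variable {k : ℕ} {f g c : Fin k → unitInterval → ℝ} {ν : Measure Sq}

lemma IsFracPartition.abs_densityMatrix_sub_le [IsFiniteMeasure ν] (hf : IsFracPartition k f)
    (hg : IsFracPartition k g) {η : ℝ} (hfst : ∀ i, ∫ x, |f i x - g i x| ∂ν.fst ≤ η)
    (hsnd : ∀ i, ∫ x, |f i x - g i x| ∂ν.snd ≤ η) (i j : Fin k) :
    |densityMatrix f ν i j - densityMatrix g ν i j| ≤ 2 * η := calc
  _ ≤ ∫ x, |f i x - g i x| ∂ν.fst + ∫ x, |f j x - g j x| ∂ν.snd :=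
    abs_integral_mul_sub_integral_mul_le (hf.1 i) (hg.1 i) (hf.1 j) (hg.1 j)
      (hf.mem_unitInterval i) (hg.mem_unitInterval i) (hf.mem_unitInterval j)
      (hg.mem_unitInterval j)
  _ ≤ 2 * η := by linarith [hfst i, hsnd j]

lemma IsFracPartition.exists_continuous_abs_densityMatrix_sub_le [IsFiniteMeasure ν]
    (hf : IsFracPartition k f) {η : ℝ} (hη : 0 < η) :
    ∃ c : Fin k → unitInterval → ℝ, IsFracPartition k c ∧ (∀ i, Continuous (c i)) ∧
      ∀ i j, |densityMatrix f ν i j - densityMatrix c ν i j| ≤ η := by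
  obtain ⟨c, hc, hc_cont, hfc⟩ := hf.exists_continuous_approx
    (m := volume + (ν.fst + ν.snd)) (Measure.le_add_right le_rfl) (half_pos hη)
  have hmarginal {m : Measure unitInterval} (hm : m ≤ volume + (ν.fst + ν.snd)) (i : Fin k) :
      ∫ x, |f i x - c i x| ∂m ≤ η / 2 :=
    (integral_mono_measure hm (.of_forall fun _ => abs_nonneg _)
      ((hf.integrable i _).sub (hc.integrable i _)).abs).trans (hfc i)
  refine ⟨c, hc, hc_cont, fun i j => ?_⟩
  have hfst := hmarginal (Measure.le_add_left (Measure.le_add_right le_rfl))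
  have hsnd := hmarginal (Measure.le_add_left (Measure.le_add_left le_rfl))
  linarith [hf.abs_densityMatrix_sub_le hc hfst hsnd i j]

lemma IsFracPartition.exists_continuous_abs_densityMatrix_gridAverage_sub_le
    [IsProbabilityMeasure ν] (hc : IsFracPartition k c) (hc_cont : ∀ i, Continuous (c i)) {η : ℝ}
    (hη : 0 < η) : ∃ g : Sq → ℝ, FairlyDistributed g ∧ Continuous g ∧
      ∀ i j, |densityMatrix c ν i j - densityMatrix (gridAverage k g) ν i j| ≤ η := by
  have hk : 0 < k := Fin.pos_iff_nonempty.2 (nonempty_of_mem_stdSimplex (hc.mem_stdSimplex 0))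
  have hk' : (0 : ℝ) < k := by exact_mod_cast hk
  obtain ⟨h, hh, hh_cont, hind⟩ :=
    (isFracPartition_indicator_Ik hk).exists_continuous_approx le_rfl
      (div_pos hη (mul_pos two_pos hk'))
  have hg := fairlyDistributed_blockKernel hk hc hh
  have hG := isFracPartition_gridAverage hk hg
  have hclose (i : Fin k) (x : unitInterval) :
      |c i x - gridAverage k (blockKernel c h) i x| ≤ η / 2 :=
    (abs_sub_gridAverage_blockKernel_le hc (fun i => hh.integrable i _) hind i x).trans_eq
      (by field_simp)
  have hmarginal (m : Measure unitInterval) [IsProbabilityMeasure m] (i : Fin k) :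
      ∫ x, |c i x - gridAverage k (blockKernel c h) i x| ∂m ≤ η / 2 :=
    (integral_mono ((hc.integrable i m).sub (hG.integrable i m)).abs (integrable_const _)
      (hclose i)).trans_eq (by simp)
  refine ⟨_, hg, continuous_blockKernel hc_cont hh_cont, fun i j => ?_⟩
  linarith [hc.abs_densityMatrix_sub_le hG (hmarginal ν.fst) (hmarginal ν.snd) i j]

lemma IsFracPartition.exists_fairlyDistributed_abs_densityMatrix_sub_le
    [IsProbabilityMeasure ν] (hf : IsFracPartition k f) {η : ℝ} (hη : 0 < η) :
    ∃ g : Sq → ℝ, FairlyDistributed g ∧ Continuous g ∧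
      ∀ i j, |densityMatrix f ν i j - densityMatrix (gridAverage k g) ν i j| ≤ η := by
  obtain ⟨c, hc, hc_cont, hfc⟩ :=
    hf.exists_continuous_abs_densityMatrix_sub_le (ν := ν) (half_pos hη)
  obtain ⟨g, hg, hg_cont, hcg⟩ :=
    hc.exists_continuous_abs_densityMatrix_gridAverage_sub_le (ν := ν) hc_cont (half_pos hη)
  refine ⟨g, hg, hg_cont, fun i j => (abs_sub_le _ (densityMatrix c ν i j) _).trans ?_⟩
  linarith [hfc i j, hcg i j]

lemma exists_forall_abs_sub_lt_of_mem_kShape {M : Matrix (Fin k) (Fin k) ℝ}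
    (hM : M ∈ kShape ν k) {δ : ℝ} (hδ : 0 < δ) :
    ∃ f, IsFracPartition k f ∧ ∀ i j, |M i j - densityMatrix f ν i j| < δ := by
  have hopen : IsOpen {N : Matrix (Fin k) (Fin k) ℝ | ∀ i j, |M i j - N i j| < δ} := by
    simp only [Set.ofPred_forall]
    exact isOpen_iInter_of_finite fun i => isOpen_iInter_of_finite fun j =>
      isOpen_lt (by fun_prop) continuous_const
  obtain ⟨N, hMN, f, hf, hN⟩ := mem_closure_iff.1 hM _ hopen (by simpa using fun _ _ => hδ)
  obtain rfl : N = densityMatrix f ν := Matrix.ext hN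
  exact ⟨f, hf, hMN⟩

end DensityMatrix

/-! ### Comparing shapes and k-shapes -/

lemma exists_mem_kShapeTilde_cellClose {k : ℕ} (hk : 0 < k) {f : Sq → ℝ}
    (hf : FairlyDistributed f) (ν : SGraphon) :
    ∃ τ ∈ kShapeTilde ν.toMeasure k, CellClose k (PhiMeas f ν.toMeasure) τ.toMeasure := by
  have hG := isFracPartition_gridAverage hk hf
  have hM := hG.densityMatrix_mem_Mstar (ν := ν.toMeasure) ν.2
  refine ⟨.ofMatrix hM, ⟨_, subset_closure ⟨_, hG, fun _ _ => rfl⟩, rfl⟩, fun i j => ?_⟩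
  change |_ - (muM _).real _| ≤ _
  rw [hf.real_PhiMeas_Ik, real_muM_Ik hM.2.1, sub_self, abs_zero]
  positivity

lemma exists_mem_shape_cellClose {ν τ : SGraphon} {k : ℕ} (hτ : τ ∈ kShapeTilde ν.toMeasure k) :
    ∃ σ ∈ shape ν, CellClose k σ.toMeasure τ.toMeasure := by
  obtain ⟨M, hM, hτM⟩ := hτ
  have hMstar : M ∈ Mstar k := kShape_subset_Mstar ν.2 k hM
  have hk : (0 : ℝ) < k := by exact_mod_cast pos_of_mem_Mstar hMstar
  have hδ : (0 : ℝ) < 1 / (k : ℝ) ^ 3 / 2 := by positivity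
  obtain ⟨f, hf, hMf⟩ := exists_forall_abs_sub_lt_of_mem_kShape hM hδ
  obtain ⟨g, hg, hg_cont, hfg⟩ :=
    hf.exists_fairlyDistributed_abs_densityMatrix_sub_le (ν := ν.toMeasure) hδ
  refine ⟨.phi hg ν, subset_closure ⟨g, hg, hg_cont, rfl⟩, fun i j => ?_⟩
  change |(PhiMeas g ν.toMeasure).real _ - _| ≤ _
  rw [hτM, hg.real_PhiMeas_Ik, real_muM_Ik hMstar.2.1, abs_sub_comm]
  refine (abs_sub_le _ (densityMatrix f ν.toMeasure i j) _).trans ?_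
  linarith [hMf i j, hfg i j]

theorem stmt4_general (m : PseudoMetricSpace SGraphon)
    (hm : (inferInstance : TopologicalSpace SGraphon) ≤ m.toUniformSpace.toTopologicalSpace)
    {ε : ℝ} (hε : 0 < ε) :
    ∀ᶠ K in atTop, ∀ ν : SGraphon,
      @Metric.hausdorffDist SGraphon m (shape ν) (kShapeTilde ν.toMeasure K) ≤ ε := by
  have hdist : Continuous fun p : SGraphon × SGraphon => dist p.1 p.2 :=
    continuous_le_dom (inf_le_inf (induced_mono hm) (induced_mono hm)) continuous_dist
  have hU : {p : SGraphon × SGraphon | dist p.1 p.2 < ε / 2} ∈ 𝓝ˢ (Set.diagonal SGraphon) :=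
    (isOpen_lt hdist continuous_const).mem_nhdsSet.2 (by
      rintro ⟨σ, _⟩ (rfl : σ = _)
      simpa using hε)
  filter_upwards [eventually_cellClose_mem hU, eventually_gt_atTop 0] with K hclose hK ν
  refine Metric.hausdorffDist_le_of_mem_dist hε.le (fun σ hσ => ?_) fun τ hτ => ?_
  · obtain ⟨σ', hσσ', f, hf, -, hσ'⟩ := mem_closure_iff.1 hσ {σ' | dist σ σ' < ε / 2}
      (isOpen_lt (hdist.comp (.prodMk_right σ)) continuous_const) (by simpa using hε)
    obtain ⟨τ, hτ, hcell⟩ := exists_mem_kShapeTilde_cellClose hK hf ν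
    have hσ'τ : dist σ' τ < ε / 2 := hclose σ' τ (hσ' ▸ hcell)
    exact ⟨τ, hτ, (dist_triangle σ σ' τ).trans (by linarith [show dist σ σ' < ε / 2 from hσσ'])⟩
  · obtain ⟨σ, hσ, hcell⟩ := exists_mem_shape_cellClose hτ
    have hστ : dist σ τ < ε / 2 := hclose σ τ hcell
    exact ⟨σ, hσ, by linarith [dist_comm σ τ]⟩

/-- Lemma `lem:regularity`, the regularity lemma. Let `ρ` be an arbitrary
metric on the space of s-graphons compatible with the weak topology. Then for every `ε > 0`
there is `K ∈ ℕ` such that for every s-graphon `ν`, the Hausdorff distance (induced by `ρ`)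
between `C(ν)` and `C̃(ν,K)` is at most `ε`. -/
theorem stmt4 (m : MetricSpace SGraphon)
    (hcompat : m.toUniformSpace.toTopologicalSpace =
      (inferInstance : TopologicalSpace SGraphon)) :
    ∀ ε : ℝ, 0 < ε → ∃ K : ℕ, 0 < K ∧ ∀ ν : SGraphon,
      @Metric.hausdorffDist SGraphon m.toPseudoMetricSpace
        (shape ν) (kShapeTilde ν.toMeasure K) ≤ ε := fun _ hε =>
  ((eventually_gt_atTop 0).and (stmt4_general m.toPseudoMetricSpace hcompat.ge hε)).exists

end
end

section
/- Let μ be an s-graphon, let C > 0, and let g, h : [0,1]² → [0,C] be bounded Borel fairly distributed functions. Then ‖φ(g,μ) − φ(h,μ)‖_{L¹([0,1]², λ²)} ≤ C · ( ‖g − h‖_{L¹([0,1]², μ⁽²⁾ × λ)} + ‖g − h‖_{L¹([0,1]², μ⁽¹⁾ × λ)} ), where μ⁽¹⁾ and μ⁽²⁾ are the marginals of μ on the first and second coordinate respectively. -/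
open MeasureTheory Topology Filter

noncomputable section

/-! For `φ(f, f')(u, v) = ∫ f(x, u) f'(y, v) dμ(x, y)`, telescope
`g(x, u) g'(y, v) - h(x, u) h'(y, v) = g(x, u) (g' - h')(y, v) + (g - h)(x, u) h'(y, v)`.
Integrating out `(x, y)` does not increase `L¹` norms, so it remains to integrate over
`μ ⊗ ν ⊗ ν'` functions of only one of the pairs `(x, u)`, `(y, v)`; these are distributed
according to `μ⁽¹⁾ ⊗ ν` and `μ⁽²⁾ ⊗ ν'`. -/

lemma norm_mul_sub_mul_le {R : Type*} [NonUnitalSeminormedRing R] (a b a' b' : R) :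
    ‖a * a' - b * b'‖ ≤ ‖a‖ * ‖a' - b'‖ + ‖b'‖ * ‖a - b‖ :=
  calc ‖a * a' - b * b'‖ = ‖a * (a' - b') + (a - b) * b'‖ := by
        rw [mul_sub, sub_mul, sub_add_sub_cancel]
    _ ≤ ‖a‖ * ‖a' - b'‖ + ‖a - b‖ * ‖b'‖ :=
        norm_add_le_of_le (norm_mul_le _ _) (norm_mul_le _ _)
    _ = ‖a‖ * ‖a' - b'‖ + ‖b'‖ * ‖a - b‖ := by rw [mul_comm ‖b'‖]

section Integral

variable {α β E R : Type*} [MeasurableSpace α] [MeasurableSpace β] {μ : Measure α} {ν : Measure β}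
  [NormedAddCommGroup E] [NormedSpace ℝ E] [NonUnitalNormedRing R]

lemma integral_norm_mul_sub_mul_le {C C' : ℝ} {a b a' b' : α → R}
    (hab : Integrable (fun x ↦ a x - b x) μ) (hab' : Integrable (fun x ↦ a' x - b' x) μ)
    (ha : ∀ᵐ x ∂μ, ‖a x‖ ≤ C) (hb' : ∀ᵐ x ∂μ, ‖b' x‖ ≤ C') :
    ∫ x, ‖a x * a' x - b x * b' x‖ ∂μ ≤
      C * ∫ x, ‖a' x - b' x‖ ∂μ + C' * ∫ x, ‖a x - b x‖ ∂μ := by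
  have hCab' : Integrable (fun x ↦ C * ‖a' x - b' x‖) μ := hab'.norm.const_mul C
  have hCab : Integrable (fun x ↦ C' * ‖a x - b x‖) μ := hab.norm.const_mul C'
  rw [← integral_const_mul, ← integral_const_mul, ← integral_add hCab' hCab]
  refine integral_mono_of_nonneg (.of_forall fun x ↦ norm_nonneg _) (hCab'.add hCab) ?_
  filter_upwards [ha, hb'] with x hax hbx
  exact (norm_mul_sub_mul_le ..).trans (by gcongr)

lemma integral_comp_of_measurePreserving {T : α → β} (hT : MeasurePreserving T μ ν) {f : β → E}
    (hf : AEStronglyMeasurable f ν) : ∫ x, f (T x) ∂μ = ∫ y, f y ∂ν := by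
  rw [← hT.map_eq] at hf ⊢
  exact (integral_map hT.aemeasurable hf).symm

lemma integral_norm_integral_prod_le [SFinite μ] [SFinite ν] {f : α × β → E}
    (hf : Integrable f (μ.prod ν)) :
    ∫ y, ‖∫ x, f (x, y) ∂μ‖ ∂ν ≤ ∫ z, ‖f z‖ ∂μ.prod ν := by
  rw [integral_prod_symm _ hf.norm]
  exact integral_mono hf.integral_prod_right.norm hf.integral_norm_prod_right
    fun y ↦ norm_integral_le_integral_norm _

lemma integral_norm_integral_sub_integral_prod_le [SFinite μ] [SFinite ν] {f g : α × β → E}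
    (hf : Integrable f (μ.prod ν)) (hg : Integrable g (μ.prod ν)) :
    ∫ y, ‖∫ x, f (x, y) ∂μ - ∫ x, g (x, y) ∂μ‖ ∂ν ≤ ∫ z, ‖f z - g z‖ ∂μ.prod ν :=
  calc ∫ y, ‖∫ x, f (x, y) ∂μ - ∫ x, g (x, y) ∂μ‖ ∂ν
      = ∫ y, ‖∫ x, (f (x, y) - g (x, y)) ∂μ‖ ∂ν :=
        (integral_fn_integral_sub norm hf.swap hg.swap).symm
    _ ≤ ∫ z, ‖f z - g z‖ ∂μ.prod ν := integral_norm_integral_prod_le (hf.sub hg)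

end Integral

section PhiBilin

variable {X X' Y Y' 𝕜 : Type*} [MeasurableSpace X] [MeasurableSpace X'] [MeasurableSpace Y]
  [MeasurableSpace Y'] [RCLike 𝕜]

/-- The bilinear form `φ(f, f')` whose diagonal `φ(f, f)` is the density `φ(f, μ)`. The two
arguments may live on different spaces, which keeps the roles of the two marginals of `μ` apart. -/
def phiBilin (μ : Measure (X × X')) (f : X × Y → 𝕜) (f' : X' × Y' → 𝕜) (p : Y × Y') : 𝕜 :=
  ∫ q, f (q.1, p.1) * f' (q.2, p.2) ∂μ

variable (μ : Measure (X × X')) [SFinite μ] (ν : Measure Y) [IsProbabilityMeasure ν]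
  (ν' : Measure Y') [IsProbabilityMeasure ν']

lemma measurePreserving_prodMap_fst_fst :
    MeasurePreserving (Prod.map Prod.fst Prod.fst) (μ.prod (ν.prod ν')) (μ.fst.prod ν) :=
  (measurable_fst.measurePreserving μ).prod measurePreserving_fst

lemma measurePreserving_prodMap_snd_snd :
    MeasurePreserving (Prod.map Prod.snd Prod.snd) (μ.prod (ν.prod ν')) (μ.snd.prod ν') :=
  (measurable_snd.measurePreserving μ).prod measurePreserving_snd

theorem stmt11_general {C C' : ℝ} {g h : X × Y → 𝕜} {g' h' : X' × Y' → 𝕜}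
    (hg : Integrable g (μ.fst.prod ν)) (hh : Integrable h (μ.fst.prod ν))
    (hg' : Integrable g' (μ.snd.prod ν')) (hh' : Integrable h' (μ.snd.prod ν'))
    (hgC : ∀ᵐ p ∂μ.fst.prod ν, ‖g p‖ ≤ C) (hhC' : ∀ᵐ p ∂μ.snd.prod ν', ‖h' p‖ ≤ C') :
    ∫ p, ‖phiBilin μ g g' p - phiBilin μ h h' p‖ ∂ν.prod ν' ≤
      C * ∫ p, ‖g' p - h' p‖ ∂μ.snd.prod ν' + C' * ∫ p, ‖g p - h p‖ ∂μ.fst.prod ν := by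
  let ρ := μ.prod (ν.prod ν')
  let S : (X × X') × (Y × Y') → X × Y := Prod.map Prod.fst Prod.fst
  let T : (X × X') × (Y × Y') → X' × Y' := Prod.map Prod.snd Prod.snd
  have hS : MeasurePreserving S ρ (μ.fst.prod ν) := measurePreserving_prodMap_fst_fst μ ν ν'
  have hT : MeasurePreserving T ρ (μ.snd.prod ν') := measurePreserving_prodMap_snd_snd μ ν ν'
  have hgS : ∀ᵐ z ∂ρ, ‖g (S z)‖ ≤ C := hS.quasiMeasurePreserving.ae hgC
  have hhT : ∀ᵐ z ∂ρ, ‖h' (T z)‖ ≤ C' := hT.quasiMeasurePreserving.ae hhC'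
  have hgg' : Integrable (fun z ↦ g (S z) * g' (T z)) ρ :=
    (hT.integrable_comp_of_integrable hg').bdd_mul
      (hS.integrable_comp_of_integrable hg).aestronglyMeasurable hgS
  have hhh' : Integrable (fun z ↦ h (S z) * h' (T z)) ρ :=
    (hS.integrable_comp_of_integrable hh).mul_bdd
      (hT.integrable_comp_of_integrable hh').aestronglyMeasurable hhT
  calc ∫ p, ‖phiBilin μ g g' p - phiBilin μ h h' p‖ ∂ν.prod ν'
      ≤ ∫ z, ‖g (S z) * g' (T z) - h (S z) * h' (T z)‖ ∂ρ :=
        integral_norm_integral_sub_integral_prod_le hgg' hhh'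
    _ ≤ C * ∫ z, ‖g' (T z) - h' (T z)‖ ∂ρ + C' * ∫ z, ‖g (S z) - h (S z)‖ ∂ρ :=
        integral_norm_mul_sub_mul_le (hS.integrable_comp_of_integrable (hg.sub hh))
          (hT.integrable_comp_of_integrable (hg'.sub hh')) hgS hhT
    _ = C * ∫ p, ‖g' p - h' p‖ ∂μ.snd.prod ν' + C' * ∫ p, ‖g p - h p‖ ∂μ.fst.prod ν := by
        congr 2
        · exact integral_comp_of_measurePreserving hT (hg'.sub hh').norm.aestronglyMeasurable
        · exact integral_comp_of_measurePreserving hS (hg.sub hh).norm.aestronglyMeasurable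

end PhiBilin

lemma FairlyDistributed.integrable {f : Sq → ℝ} (hf : FairlyDistributed f) (ρ : Measure Sq)
    [IsFiniteMeasure ρ] : Integrable f ρ := by
  obtain ⟨C, hC⟩ := hf.bounded
  exact .of_mem_Icc 0 C hf.measurable.aemeasurable (.of_forall fun p ↦ ⟨hf.nonneg p, hC p⟩)

lemma FairlyDistributed.norm_le {f : Sq → ℝ} (hf : FairlyDistributed f) {C : ℝ}
    (hC : ∀ p, f p ≤ C) (p : Sq) : ‖f p‖ ≤ C :=
  (Real.norm_of_nonneg (hf.nonneg p)).trans_le (hC p)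

/-- For an s-graphon `μ` and bounded Borel fairly distributed functions
`g, h : [0,1]² → [0,C]`,
`‖φ(g,μ) − φ(h,μ)‖_{L¹(λ²)} ≤ C (‖g−h‖_{L¹(μ⁽²⁾×λ)} + ‖g−h‖_{L¹(μ⁽¹⁾×λ)})`,
where `μ⁽¹⁾, μ⁽²⁾` are the two marginals of `μ`. -/
theorem stmt11 (μ : Measure Sq) (hprob : IsProbabilityMeasure μ) (hsymm : IsSymmSq μ)
    (C : ℝ) (hC : 0 < C) (g h : Sq → ℝ) (hg : FairlyDistributed g) (hh : FairlyDistributed h)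
    (hgC : ∀ p, g p ≤ C) (hhC : ∀ p, h p ≤ C) :
    ∫ p, |phiFn g μ p - phiFn h μ p| ≤
      C * ((∫ p, |g p - h p| ∂((μ.map Prod.snd).prod volume)) +
           (∫ p, |g p - h p| ∂((μ.map Prod.fst).prod volume))) :=
  (stmt11_general μ volume volume (hg.integrable _) (hh.integrable _) (hg.integrable _)
    (hh.integrable _) (.of_forall (hg.norm_le hgC)) (.of_forall (hh.norm_le hhC))).trans_eq
    (mul_add ..).symm

end
end
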